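/- Let 𝒯 be a T-mesh of Ω with d ≥ 2. Then every (d−2)-dimensional mesh entity T ∈ H^{d−2} with T ⊄ ∂Ω lies in the boundary of at least three and at most four hyperfaces of H^{d−1}. Consequently every T-junction has valence exactly 3, and its associated cell ascell(T), its orthogonal direction odir(T) and its pointing direction pdir(T) are uniquely determined by T. -/

import Mathlib

open Set

namespace TSpline

/-- A box in `ℝ^d`, given componentwise. -/
abbrev Box (d : ℕ) := Fin d → Set ℝ

/-- The subset of `ℝ^d` determined by a box. -/
def toSet {d : ℕ} (E : Box d) : Set (Fin d → ℝ) := Set.pi Set.univ E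

/-- The closed index domain `cl Ω = ∏ₖ [0, Nₖ]`. -/
def domain {d : ℕ} (N : Fin d → ℕ) : Set (Fin d → ℝ) :=
  Set.pi Set.univ (fun k => Set.Icc (0 : ℝ) (N k))

/-- The boundary `∂Ω` of the index domain. -/
def bdryDomain {d : ℕ} (N : Fin d → ℕ) : Set (Fin d → ℝ) := frontier (domain N)

/-- A component which is an integer singleton `{n}`, `0 ≤ n ≤ Nₖ`. -/
def IsSingletonComp (Nk : ℕ) (S : Set ℝ) : Prop :=
  ∃ n : ℕ, n ≤ Nk ∧ S = {(n : ℝ)}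

/-- A component which is an open interval with integer endpoints in `[0, Nₖ]`. -/
def IsIntervalComp (Nk : ℕ) (S : Set ℝ) : Prop :=
  ∃ a b : ℕ, a < b ∧ b ≤ Nk ∧ S = Set.Ioo (a : ℝ) (b : ℝ)

/-- A mesh entity: every component is an integer singleton or an open integer interval. -/
def IsMeshEntity {d : ℕ} (N : Fin d → ℕ) (E : Box d) : Prop :=
  ∀ k, IsSingletonComp (N k) (E k) ∨ IsIntervalComp (N k) (E k)

/-- The directions in which an entity has a singleton component. -/
def singDirs {d : ℕ} (E : Box d) : Set (Fin d) := {i | ∃ r : ℝ, E i = {r}}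

/-- Split all entities of `M` contained in the region `D` whose `j`-th component is `Q j`
into the three children obtained by bisecting the `j`-th component at `m`. -/
def midSplit {d : ℕ} (M : Set (Box d)) (Q : Box d) (j : Fin d) (m : ℝ) (D : Box d) :
    Set (Box d) :=
  (M \ {E | E ∈ M ∧ (∀ k, E k ⊆ D k) ∧ E j = Q j}) ∪
  ⋃ E ∈ {E | E ∈ M ∧ (∀ k, E k ⊆ D k) ∧ E j = Q j},
    ({Function.update E j (Set.Ioo (sInf (Q j)) m),
      Function.update E j {m},
      Function.update E j (Set.Ioo m (sSup (Q j)))} : Set (Box d))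

/-- One symmetric bisection of a `d`-dimensional cell with integer midpoint. -/
def BisectStep {d : ℕ} (N : Fin d → ℕ) (M M' : Set (Box d)) : Prop :=
  ∃ Q ∈ M, ∃ j : Fin d, ∃ a b mid : ℕ,
    (∀ k, IsIntervalComp (N k) (Q k)) ∧
    Q j = Set.Ioo (a : ℝ) (b : ℝ) ∧ a + b = 2 * mid ∧
    M' = midSplit M Q j (mid : ℝ) (fun k => closure (Q k))

/-- A tensor-product mesh with integer breakpoints. -/
def IsTensorMesh {d : ℕ} (N : Fin d → ℕ) (M : Set (Box d)) : Prop :=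
  ∃ G : Fin d → Finset ℕ,
    (∀ k, 0 ∈ G k ∧ N k ∈ G k ∧ ∀ n ∈ G k, n ≤ N k) ∧
    M = {E | ∀ k, (∃ n ∈ G k, E k = {(n : ℝ)}) ∨
          (∃ a ∈ G k, ∃ b ∈ G k, a < b ∧ (∀ c ∈ G k, c ≤ a ∨ b ≤ c) ∧
            E k = Set.Ioo (a : ℝ) (b : ℝ))}

/-- A T-mesh of the index domain: a finite disjoint partition of `cl Ω` into mesh
entities, obtained from a tensor-product mesh by repeated symmetric bisections. -/
structure TMesh (d : ℕ) (N : Fin d → ℕ) where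
  entities : Set (Box d)
  finite : entities.Finite
  mem_entity : ∀ E ∈ entities, IsMeshEntity N E
  union_eq : (⋃ E ∈ entities, toSet E) = domain N
  pairwise_disjoint : ∀ E ∈ entities, ∀ F ∈ entities, E ≠ F → toSet E ∩ toSet F = ∅
  constructed : ∃ M₀ : Set (Box d), IsTensorMesh N M₀ ∧
    Relation.ReflTransGen (BisectStep N) M₀ entities

variable {d : ℕ} {N : Fin d → ℕ}

/-- `H^k`: the entities with exactly `d - k` singleton components. -/
def Hdim (T : TMesh d N) (k : ℕ) : Set (Box d) :=
  {E ∈ T.entities | (singDirs E).ncard = d - k}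

/-- The `j`-orthogonal skeleton `Sk_j`. -/
def skel (T : TMesh d N) (j : Fin d) : Set (Fin d → ℝ) :=
  ⋃ F ∈ {F ∈ Hdim T (d - 1) | ∃ r : ℝ, F j = {r}}, closure (toSet F)

/-- The valence of a `(d-2)`-dimensional entity: the number of hyperfaces in whose
boundary it lies. -/
noncomputable def valence (T : TMesh d N) (J : Box d) : ℕ :=
  {F ∈ Hdim T (d - 1) | toSet J ⊆ frontier (toSet F)}.ncard

/-- A T-junction (hanging interface). -/
def IsTJunction (T : TMesh d N) (J : Box d) : Prop :=
  J ∈ Hdim T (d - 2) ∧ ¬ toSet J ⊆ bdryDomain N ∧ valence T J < 4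

/-- `TJData T J Q i j`: `Q` is an associated cell of the T-junction `J`, with orthogonal
direction `i` and pointing direction `j`. -/
def TJData (T : TMesh d N) (J Q : Box d) (i j : Fin d) : Prop :=
  Q ∈ Hdim T d ∧ toSet J ⊆ frontier (toSet Q) ∧
  closure (toSet J) ∩ Set.pi Set.univ (fun k => frontier (Q k)) = ∅ ∧
  i ≠ j ∧ (∃ r : ℝ, J i = {r}) ∧ (∃ r : ℝ, J j = {r}) ∧
  J i ⊆ Q i ∧ J i ≠ Q i ∧ J j ⊆ frontier (Q j)

/-- `⌊(p_k + 1)/2⌋`. -/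
def halfdeg (p : Fin d → ℕ) (k : Fin d) : ℕ := (p k + 1) / 2

/-- The active region `AR_p`. -/
def activeRegion (N p : Fin d → ℕ) : Set (Fin d → ℝ) :=
  Set.pi Set.univ (fun k => Set.Icc (halfdeg p k : ℝ) ((N k : ℝ) - (halfdeg p k : ℝ)))

/-- The slice `S_k(n)`. -/
def slice (N : Fin d → ℕ) (k : Fin d) (n : ℕ) : Set (Fin d → ℝ) :=
  {x ∈ domain N | x k = (n : ℝ)}

/-- The `k`-th frame region `FR^(k)`. -/
def frameRegion (N p : Fin d → ℕ) (k : Fin d) : Set (Fin d → ℝ) :=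
  {x ∈ domain N | x k ∈ Set.Icc (0 : ℝ) (halfdeg p k : ℝ) ∪
      Set.Icc ((N k : ℝ) - (halfdeg p k : ℝ)) (N k : ℝ)}

/-- Admissibility of a T-mesh. -/
def Admissible (p : Fin d → ℕ) (T : TMesh d N) : Prop :=
  (∀ k : Fin d, ∀ J Q : Box d, ∀ i j : Fin d, IsTJunction T J → TJData T J Q i j →
      (i = k ∨ j = k) → ¬ toSet J ⊆ frameRegion N p k) ∧
  (∀ k : Fin d, ∀ n : ℕ, (n ≤ halfdeg p k ∨ (N k - halfdeg p k ≤ n ∧ n ≤ N k)) →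
      slice N k n ⊆ skel T k)

/-- Anchors of degree `p`. -/
def IsAnchor (p : Fin d → ℕ) (T : TMesh d N) (A : Box d) : Prop :=
  A ∈ T.entities ∧ toSet A ⊆ activeRegion N p ∧
  ∀ j : Fin d, (∃ r : ℝ, A j = {r}) ↔ Odd (p j)

/-- `P_{j,n}(E)`: replace the `j`-th component of `E` by `{n}`. -/
def proj {d : ℕ} (E : Box d) (j : Fin d) (n : ℕ) : Box d :=
  Function.update E j {(n : ℝ)}

/-- The global knot vector `gv_j(E)` (as a set of integer indices). -/
def gv (T : TMesh d N) (j : Fin d) (E : Box d) : Set ℕ :=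
  {n | n ≤ N j ∧ toSet (proj E j n) ⊆ skel T j}

/-- `V` is a block of consecutive entries of `G`. -/
def IsBlockOf (V G : Set ℕ) : Prop :=
  V ⊆ G ∧ V.Finite ∧ ∀ g ∈ G, ∀ a ∈ V, ∀ b ∈ V, a ≤ g → g ≤ b → g ∈ V

/-- Two knot vectors overlap (`⋈`): both occur as blocks of consecutive entries of a
common knot vector. -/
def Overlaps (V₁ V₂ : Set ℕ) : Prop :=
  ∃ W : Set ℕ, W.Finite ∧ IsBlockOf V₁ W ∧ IsBlockOf V₂ W

/-- The convex hull in `ℝ` of a set of integer indices. -/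
def convOf (V : Set ℕ) : Set ℝ := convexHull ℝ ((fun n : ℕ => (n : ℝ)) '' V)

/-- The local knot vector of an anchor `A` in direction `j`: the block of `p_j + 2`
consecutive entries of `gv_j(A)` whose entry of rank `⌊(p_j+1)/2⌋` is `inf A_j`. -/
def IsAnchorKV (T : TMesh d N) (p : Fin d → ℕ) (A : Box d) (j : Fin d) (V : Set ℕ) : Prop :=
  IsBlockOf V (gv T j A) ∧ V.ncard = p j + 2 ∧
  ∃ a : ℕ, (a : ℝ) = sInf (A j) ∧ a ∈ V ∧ {v ∈ V | v < a}.ncard = halfdeg p j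

open Classical in
noncomputable def anchorKV (T : TMesh d N) (p : Fin d → ℕ) (A : Box d) (j : Fin d) :
    Set ℕ :=
  if h : ∃ V, IsAnchorKV T p A j V then h.choose else ∅

/-- The index support of an anchor. -/
noncomputable def suppA (T : TMesh d N) (p : Fin d → ℕ) (A : Box d) : Set (Fin d → ℝ) :=
  Set.pi Set.univ (fun k => convOf (anchorKV T p A k))

/-- The local knot vector of a T-junction `J` (with associated cell `Q`, orthogonal
direction `i`, pointing direction `j`) in direction `k`. -/
def IsTJKV (T : TMesh d N) (p : Fin d → ℕ) (J Q : Box d) (i j k : Fin d) (V : Set ℕ) :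
    Prop :=
  if k = i then ∃ t : ℕ, J i = {(t : ℝ)} ∧ V = {t}
  else if k = j then
    IsBlockOf V (gv T j J) ∧ V.ncard = p j + 1 ∧
    ((Even (p j) ∧ ∃ t : ℕ, J j = {(t : ℝ)} ∧ t ∈ V ∧ {v ∈ V | v < t}.ncard = p j / 2) ∨
     (Odd (p j) ∧ ∃ a b : ℕ, (a : ℝ) = sInf (Q j) ∧ (b : ℝ) = sSup (Q j) ∧ a ∈ V ∧ b ∈ V ∧
        {v ∈ V | v < a}.ncard = p j / 2 ∧ {v ∈ V | v < b}.ncard = p j / 2 + 1))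
  else
    IsBlockOf V (gv T k J) ∧ V.ncard = p k + 2 + p k % 2 ∧
    ∃ a b : ℕ, a ∈ V ∧ b ∈ V ∧ J k = Set.Ioo (a : ℝ) (b : ℝ) ∧
      {v ∈ V | v < a}.ncard = (p k + 1) / 2 ∧ {v ∈ V | v < b}.ncard = (p k + 1) / 2 + 1

/-- Local knot vector of a T-junction, quantifying over the (unique) associated data. -/
def IsTJKVFull (T : TMesh d N) (p : Fin d → ℕ) (J : Box d) (k : Fin d) (V : Set ℕ) :
    Prop :=
  ∃ Q : Box d, ∃ i j : Fin d, TJData T J Q i j ∧ IsTJKV T p J Q i j k V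

open Classical in
noncomputable def tjKV (T : TMesh d N) (p : Fin d → ℕ) (J : Box d) (k : Fin d) : Set ℕ :=
  if h : ∃ V, IsTJKVFull T p J k V then h.choose else ∅

/-- The geometric T-junction extension `GTJ(J)`. -/
noncomputable def GTJ (T : TMesh d N) (p : Fin d → ℕ) (J : Box d) : Set (Fin d → ℝ) :=
  Set.pi Set.univ (fun k => convOf (tjKV T p J k))

/-- `J` is a T-junction with orthogonal direction `i` and pointing direction `j`. -/
def HasDirs (T : TMesh d N) (J : Box d) (i j : Fin d) : Prop :=
  IsTJunction T J ∧ ∃ Q : Box d, TJData T J Q i j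

/-- Strong geometric analysis-suitability. -/
def SGAS (T : TMesh d N) (p : Fin d → ℕ) : Prop :=
  ∀ J₁ J₂ : Box d, ∀ i₁ j₁ i₂ j₂ : Fin d,
    HasDirs T J₁ i₁ j₁ → HasDirs T J₂ i₂ j₂ → i₁ ≠ i₂ →
    GTJ T p J₁ ∩ GTJ T p J₂ = ∅

/-- Weak geometric analysis-suitability. -/
def WGAS (T : TMesh d N) (p : Fin d → ℕ) : Prop :=
  ∀ J₁ J₂ : Box d, ∀ i₁ j₁ i₂ j₂ : Fin d,
    HasDirs T J₁ i₁ j₁ → HasDirs T J₂ i₂ j₂ → i₁ ≠ i₂ → j₁ ≠ j₂ →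
    GTJ T p J₁ ∩ GTJ T p J₂ = ∅

/-- The abstract T-junction extension `ATJ_j(n)`. -/
noncomputable def ATJ (T : TMesh d N) (p : Fin d → ℕ) (j : Fin d) (n : ℕ) :
    Set (Fin d → ℝ) :=
  slice N j n ∩
  (⋃ A ∈ {A : Box d | IsAnchor p T A ∧ n ∈ gv T j A}, suppA T p A) ∩
  (⋃ A ∈ {A : Box d | IsAnchor p T A ∧ n ∉ gv T j A}, suppA T p A)

/-- `ATJ_j = ⋃ₙ ATJ_j(n)`. -/
noncomputable def ATJfull (T : TMesh d N) (p : Fin d → ℕ) (j : Fin d) :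
    Set (Fin d → ℝ) :=
  ⋃ n ∈ Set.Iic (N j), ATJ T p j n

/-- Abstract analysis-suitability. -/
def AAS (T : TMesh d N) (p : Fin d → ℕ) : Prop :=
  ∀ i j : Fin d, i ≠ j → ∀ n m : ℕ, n ≤ N i → m ≤ N j →
    ATJ T p i n ∩ ATJ T p j m = ∅

/-- Two anchors weakly partially overlap. -/
def WeakPartOverlap (T : TMesh d N) (p : Fin d → ℕ) (A₁ A₂ : Box d) : Prop :=
  ∃ ℓ : Fin d, anchorKV T p A₁ ℓ ≠ anchorKV T p A₂ ℓ ∧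
    Overlaps (anchorKV T p A₁ ℓ) (anchorKV T p A₂ ℓ)

/-- Two anchors strongly partially overlap. -/
def StrongPartOverlap (T : TMesh d N) (p : Fin d → ℕ) (A₁ A₂ : Box d) : Prop :=
  suppA T p A₁ ∩ suppA T p A₂ = ∅ ∨
  d - 1 ≤ {k : Fin d | Overlaps (anchorKV T p A₁ k) (anchorKV T p A₂ k)}.ncard

/-- Weak dual-compatibility. -/
def WDC (T : TMesh d N) (p : Fin d → ℕ) : Prop :=
  ∀ A₁ A₂ : Box d, IsAnchor p T A₁ → IsAnchor p T A₂ → A₁ ≠ A₂ →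
    WeakPartOverlap T p A₁ A₂

/-- Strong dual-compatibility. -/
def SDC (T : TMesh d N) (p : Fin d → ℕ) : Prop :=
  ∀ A₁ A₂ : Box d, IsAnchor p T A₁ → IsAnchor p T A₂ → A₁ ≠ A₂ →
    StrongPartOverlap T p A₁ A₂

/-- `Q'` is a neighboring cell of `Q` in direction `ℓ`. -/
def NeighborInDir (T : TMesh d N) (Q Q' : Box d) (ℓ : Fin d) : Prop :=
  Q' ∈ Hdim T d ∧ Q' ≠ Q ∧
  (sSup (Q ℓ) = sInf (Q' ℓ) ∨ sSup (Q' ℓ) = sInf (Q ℓ)) ∧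
  ∀ k : Fin d, k ≠ ℓ → (Q k ∩ Q' k).Nonempty

/-- Assumption A: every cell has neighbor cells in the active region in at least three
pairwise distinct directions. -/
def AssumptionA (T : TMesh d N) (p : Fin d → ℕ) : Prop :=
  ∀ Q ∈ Hdim T d, ∃ l₁ l₂ l₃ : Fin d, l₁ ≠ l₂ ∧ l₁ ≠ l₃ ∧ l₂ ≠ l₃ ∧
    ∀ l ∈ ({l₁, l₂, l₃} : Set (Fin d)),
      ∃ Q' : Box d, NeighborInDir T Q Q' l ∧ toSet Q' ⊆ activeRegion N p

/-- The extended region `D` of Algorithm `subdiv`. -/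
def extendD (N p : Fin d → ℕ) (Q : Box d) (j : Fin d) : Box d := fun ℓ =>
  closure (Q ℓ) ∪
  {x : ℝ | ℓ ≠ j ∧ sInf (Q ℓ) = (halfdeg p ℓ : ℝ) ∧
      x ∈ Set.Icc (0 : ℝ) (halfdeg p ℓ : ℝ)} ∪
  {x : ℝ | ℓ ≠ j ∧ sSup (Q ℓ) = (N ℓ : ℝ) - (halfdeg p ℓ : ℝ) ∧
      x ∈ Set.Icc ((N ℓ : ℝ) - (halfdeg p ℓ : ℝ)) (N ℓ : ℝ)}

/-- The entity set produced by Algorithm `subdiv(𝒯, Q, j)`. -/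
def subdivEntities (N p : Fin d → ℕ) (M : Set (Box d)) (Q : Box d) (j : Fin d) :
    Set (Box d) :=
  midSplit M Q j ((sInf (Q j) + sSup (Q j)) / 2) (extendD N p Q j)

open Classical in
/-- The componentwise minimal bounding box `M(E,F)`. -/
noncomputable def MBox {d : ℕ} (E F : Box d) : Box d := fun ℓ =>
  if (E ℓ ∩ F ℓ).Nonempty then E ℓ ∩ F ℓ
  else if sSup (E ℓ) ≤ sInf (F ℓ) then Set.Icc (sSup (E ℓ)) (sInf (F ℓ))
  else Set.Icc (sSup (F ℓ)) (sInf (E ℓ))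

/-- `V` is the local knot vector of `E` (an anchor or a T-junction) in direction `j`. -/
def IsLocalKVOf (T : TMesh d N) (p : Fin d → ℕ) (E : Box d) (j : Fin d) (V : Set ℕ) :
    Prop :=
  (IsAnchor p T E ∧ IsAnchorKV T p E j V) ∨
  (IsTJunction T E ∧ IsTJKVFull T p E j V)

end TSpline

/-!
Let `x` be a point of an interior entity `J` with `singDirs J = {i, j}`. The four arms from `x` to
`x ± eᵢ / 2` and `x ± eⱼ / 2` end inside hyperfaces or cells. The hyperfaces having `J` in their
boundary correspond bijectively to the arms ending in hyperfaces, so it remains to see that at most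
one arm ends in a cell. Two arms in different directions cannot both do so, since the quadrant they
bound would lie in both cells. Neither can two opposite arms in direction `i`: `J` lies in the
closure of a hyperface orthogonal to `j`, and such a hyperface contains one of the two arms. If an
arm in direction `j` does end in a cell, this cell is the associated cell of `J` and `j` is the
pointing direction.

Two properties of the mesh enter: an entity meeting the closure of another one is contained in it,
and an entity with a singleton component in direction `j` lies in the closure of a hyperface
orthogonal to `j`. Both hold for tensor-product meshes and survive bisection, because the interval
components are dyadic: any two are disjoint, equal, or one lies in a half of the other.
-/

namespace TSpline

section Dyadic

variable {G : Finset ℕ} {a b c e m : ℕ}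

/-- `a < b` are consecutive breakpoints of the grid `G`. -/
def Consecutive (G : Finset ℕ) (a b : ℕ) : Prop :=
  a ∈ G ∧ b ∈ G ∧ a < b ∧ ∀ c ∈ G, c ≤ a ∨ b ≤ c

/-- `(a, b)` arises from an interval between consecutive breakpoints of `G` by repeated bisection
at integer midpoints. Intervals are encoded by their endpoints. -/
inductive Dyadic (G : Finset ℕ) : ℕ → ℕ → Prop
  | base {a b : ℕ} (h : Consecutive G a b) : Dyadic G a b
  | left {a b m : ℕ} (h : Dyadic G a b) (hm : a + b = 2 * m) : Dyadic G a m
  | right {a b m : ℕ} (h : Dyadic G a b) (hm : a + b = 2 * m) : Dyadic G m b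

/-- `(c, e)` is contained in one of the two halves of `(a, b)`. -/
def InHalf (c e a b : ℕ) : Prop :=
  a ≤ c ∧ e ≤ b ∧ (2 * e ≤ a + b ∨ a + b ≤ 2 * c)

lemma exists_consecutive_endpoint (hG : (G : Set ℕ).Nontrivial) {n : ℕ} (hn : n ∈ G) :
    ∃ a b, Consecutive G a b ∧ (n = a ∨ n = b) := by
  obtain ⟨c, hc, hcn⟩ := hG.exists_ne n
  rcases lt_or_gt_of_ne hcn with hlt | hgt
  · obtain ⟨a, ha, han, hmax⟩ := Finset.exists_next_left ⟨c, hc, hlt⟩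
    exact ⟨a, n, ⟨ha, hn, han, fun z hz => (lt_or_ge z n).imp_left (hmax z hz)⟩, .inr rfl⟩
  · obtain ⟨b, hb, hnb, hmin⟩ := Finset.exists_next_right ⟨c, hc, hgt⟩
    exact ⟨n, b, ⟨hn, hb, hnb, fun z hz => (le_or_gt z n).imp_right (hmin z hz)⟩, .inl rfl⟩

lemma Dyadic.lt (h : Dyadic G a b) : a < b := by
  induction h with
  | base h => exact h.2.2.1
  | left _ hm ih | right _ hm ih => omega

lemma Dyadic.subset_or_disjoint_of_consecutive (h : Dyadic G a b) (hc : Consecutive G c e) :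
    (c ≤ a ∧ b ≤ e) ∨ e ≤ a ∨ b ≤ c := by
  induction h with
  | @base a b h =>
    obtain ⟨ha, hb, _, hab⟩ := h
    obtain ⟨hc, he, _, hce⟩ := hc
    have := hab c hc
    have := hab e he
    have := hce a ha
    have := hce b hb
    omega
  | left h hm ih | right h hm ih =>
    have := h.lt
    omega

lemma Dyadic.laminar (h : Dyadic G a b) (h' : Dyadic G c e) :
    b ≤ c ∨ e ≤ a ∨ (a = c ∧ b = e) ∨ InHalf c e a b ∨ InHalf a b c e := by
  simp only [InHalf]
  induction h generalizing c e with
  | base h =>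
    induction h' with
    | base h' =>
      have := Dyadic.subset_or_disjoint_of_consecutive (.base h) h'
      have := Dyadic.subset_or_disjoint_of_consecutive (.base h') h
      omega
    | left h' hm ih | right h' hm ih =>
      have := h'.subset_or_disjoint_of_consecutive h
      have := h'.lt
      omega
  | left h hm ih | right h hm ih =>
    induction h' with
    | base h' =>
      have := h.subset_or_disjoint_of_consecutive h'
      have := h.lt
      have := ih (.base h')
      omega
    | left h' hm' ih' | right h' hm' ih' =>
      have := ih (.left h' hm')
      have := ih (.right h' hm')
      have := h.lt
      have := h'.lt
      omega

lemma Dyadic.eq_or_le_midpoint_or_midpoint_le (h : Dyadic G a b) (h' : Dyadic G c e)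
    (hm : a + b = 2 * m) (hac : a ≤ c) (heb : e ≤ b) :
    (c = a ∧ e = b) ∨ e ≤ m ∨ m ≤ c := by
  have hlam := h.laminar h'
  have := h.lt
  have := h'.lt
  simp only [InHalf] at hlam
  omega

end Dyadic

section Bisection1D

variable {S X : Set ℝ} {a m b : ℝ}

lemma Ioo_ne_singleton {α : Type*} [LinearOrder α] [DenselyOrdered α] (a b r : α) :
    Ioo a b ≠ {r} := by
  intro h
  have hab : a < b := nonempty_Ioo.1 (h ▸ singleton_nonempty r)
  exact Ioo_infinite hab (h ▸ finite_singleton r)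

lemma natCast_Ioo_inj {a b c e : ℕ} (hab : a < b) (hce : c < e)
    (h : Ioo (a : ℝ) b = Ioo (c : ℝ) e) : a = c ∧ b = e := by
  have hab' : (a : ℝ) < b := mod_cast hab
  have hce' : (c : ℝ) < e := mod_cast hce
  have hinf := congrArg sInf h
  have hsup := congrArg sSup h
  rw [csInf_Ioo hab', csInf_Ioo hce'] at hinf
  rw [csSup_Ioo hab', csSup_Ioo hce'] at hsup
  exact ⟨mod_cast hinf, mod_cast hsup⟩

/-- The three components into which the interval `(a, b)` is bisected at `m`. -/
def bisectionPieces (a m b : ℝ) : Set (Set ℝ) :=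
  {Ioo a m, {m}, Ioo m b}

/-- `S` is not cut by `m`: it lies strictly on one side of `m`, or consists of `m` alone. -/
def LiesOnSide (m : ℝ) (S : Set ℝ) : Prop :=
  S ⊆ Iio m ∨ S ⊆ {m} ∨ S ⊆ Ioi m

lemma liesOnSide_singleton (m r : ℝ) : LiesOnSide m {r} := by
  simpa only [LiesOnSide, singleton_subset_iff, mem_Iio, mem_singleton_iff, mem_Ioi]
    using lt_trichotomy r m

lemma liesOnSide_of_mem_bisectionPieces (hX : X ∈ bisectionPieces a m b) : LiesOnSide m X := by
  rcases hX with rfl | rfl | rfl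
  exacts [.inl Ioo_subset_Iio_self, .inr (.inl subset_rfl), .inr (.inr Ioo_subset_Ioi_self)]

lemma subset_of_mem_bisectionPieces (ham : a < m) (hmb : m < b) (hX : X ∈ bisectionPieces a m b) :
    X ⊆ Ioo a b := by
  rcases hX with rfl | rfl | rfl
  exacts [Ioo_subset_Ioo_right hmb.le, singleton_subset_iff.2 ⟨ham, hmb⟩,
    Ioo_subset_Ioo_left ham.le]

lemma LiesOnSide.subset_closure_piece (hS : LiesOnSide m S) (ham : a < m) (hmb : m < b)
    (hSab : S ⊆ Icc a b) (hX : X ∈ bisectionPieces a m b) (hmeet : (S ∩ closure X).Nonempty) :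
    S ⊆ closure X := by
  obtain ⟨y, hyS, hyX⟩ := hmeet
  rcases hX with rfl | rfl | rfl
  · rw [closure_Ioo ham.ne] at hyX ⊢
    refine fun z hz => ⟨(hSab hz).1, ?_⟩
    rcases hS with hS | hS | hS
    exacts [(hS hz).le, (hS hz).le, absurd hyX.2 (not_le.2 (hS hyS))]
  · rw [closure_singleton] at hyX ⊢
    obtain rfl : y = m := hyX
    rcases hS with hS | hS | hS
    exacts [absurd (hS hyS) (lt_irrefl y), hS, absurd (hS hyS) (lt_irrefl y)]
  · rw [closure_Ioo hmb.ne] at hyX ⊢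
    refine fun z hz => ⟨?_, (hSab hz).2⟩
    rcases hS with hS | hS | hS
    exacts [absurd hyX.1 (not_le.2 (hS hyS)), (hS hz).ge, (hS hz).le]

lemma LiesOnSide.exists_piece_subset_closure (hS : LiesOnSide m S) (ham : a < m) (hmb : m < b)
    (hSab : S ⊆ Icc a b) :
    ∃ X ∈ bisectionPieces a m b, (∀ r, X ≠ {r}) ∧ S ⊆ closure X := by
  by_cases hle : S ⊆ Iic m
  · refine ⟨Ioo a m, .inl rfl, Ioo_ne_singleton a m, ?_⟩
    rw [closure_Ioo ham.ne]
    exact fun z hz => ⟨(hSab hz).1, hle hz⟩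
  · have hge : S ⊆ Ici m := by
      rcases hS with hS | hS | hS
      exacts [absurd (hS.trans Iio_subset_Iic_self) hle,
        absurd (hS.trans (singleton_subset_iff.2 self_mem_Iic)) hle, hS.trans Ioi_subset_Ici_self]
    refine ⟨Ioo m b, .inr (.inr rfl), Ioo_ne_singleton m b, ?_⟩
    rw [closure_Ioo hmb.ne]
    exact fun z hz => ⟨hge hz, (hSab hz).2⟩

end Bisection1D

section Box

variable {d : ℕ} {E F Q : Box d} {X : Set ℝ} {x : Fin d → ℝ} {k l : Fin d}

/-- The componentwise closure of a box. With the componentwise order on boxes,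
`E ≤ closureBox F` says that `E` lies in the closure of `F`. -/
def closureBox (F : Box d) : Box d := fun k => closure (F k)

lemma mem_toSet : x ∈ toSet E ↔ ∀ k, x k ∈ E k := mem_univ_pi

lemma toSet_closureBox (F : Box d) : toSet (closureBox F) = closure (toSet F) :=
  (closure_pi_set _ _).symm

lemma le_closureBox_self (F : Box d) : F ≤ closureBox F := fun _ => subset_closure

lemma le_closureBox_trans (hEF : E ≤ closureBox F) (hFQ : F ≤ closureBox Q) :
    E ≤ closureBox Q :=
  fun k => (hEF k).trans (closure_minimal (hFQ k) isClosed_closure)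

lemma closureBox_mono (h : E ≤ F) : closureBox E ≤ closureBox F := fun k => closure_mono (h k)

lemma le_closureBox_update_iff :
    E ≤ closureBox (Function.update F l X) ↔ E l ⊆ closure X ∧ ∀ k ≠ l, E k ⊆ closure (F k) := by
  have hupd : closureBox (Function.update F l X) = Function.update (closureBox F) l (closure X) :=
    funext (Function.apply_update (fun _ => closure) F l X)
  rw [hupd]
  exact le_update_iff

lemma le_of_toSet_subset (hE : (toSet E).Nonempty) (h : toSet E ⊆ toSet F) : E ≤ F := by
  rcases pi_subset_pi_iff.1 h with h | h
  · exact fun k => h k (mem_univ k)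
  · exact absurd h hE.ne_empty

lemma notMem_singDirs_of_eq_Ioo {a b : ℝ} (h : E k = Ioo a b) : k ∉ singDirs E := by
  rintro ⟨r, hr⟩
  exact Ioo_ne_singleton a b r (h.symm.trans hr)

lemma eq_singleton_of_mem_singDirs (hk : k ∈ singDirs E) (hx : x ∈ toSet E) : E k = {x k} := by
  obtain ⟨r, hr⟩ := hk
  obtain rfl : x k = r := by simpa only [hr, mem_singleton_iff] using mem_toSet.1 hx k
  exact hr

lemma mem_singDirs_update_of_ne (h : k ≠ l) :
    k ∈ singDirs (Function.update E l X) ↔ k ∈ singDirs E := by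
  simp only [singDirs, mem_ofPred_eq, Function.update_of_ne h]

lemma singDirs_update_singleton (E : Box d) (l : Fin d) (r : ℝ) :
    singDirs (Function.update E l {r}) = insert l (singDirs E) := by
  ext k
  rcases eq_or_ne k l with rfl | h
  · simp [singDirs]
  · simp only [mem_singDirs_update_of_ne h, mem_insert_iff, h, false_or]

lemma singDirs_update_of_ne_singleton (hX : ∀ r, X ≠ {r}) (hl : l ∉ singDirs E) :
    singDirs (Function.update E l X) = singDirs E := by
  ext k
  rcases eq_or_ne k l with rfl | h
  · refine iff_of_false ?_ hl
    rintro ⟨r, hr⟩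
    exact hX r (by simpa only [Function.update_self] using hr)
  · exact mem_singDirs_update_of_ne h

lemma singDirs_subset_of_le_closureBox (hE : (toSet E).Nonempty) (h : E ≤ closureBox F) :
    singDirs F ⊆ singDirs E := by
  rintro k ⟨r, hr⟩
  obtain ⟨x, hx⟩ := hE
  have hsub : E k ⊆ {r} := by simpa only [closureBox, hr, closure_singleton] using h k
  exact ⟨r, hsub.antisymm (singleton_subset_iff.2 (hsub (mem_toSet.1 hx k) ▸ mem_toSet.1 hx k))⟩

end Box

section TensorMesh

variable {G : Finset ℕ} {S S' : Set ℝ} {y : ℝ}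

/-- A component of an entity of a tensor-product mesh, with breakpoints `G` in that direction. -/
def GridComponent (G : Finset ℕ) (S : Set ℝ) : Prop :=
  (∃ n ∈ G, S = {(n : ℝ)}) ∨ ∃ a b, Consecutive G a b ∧ S = Ioo (a : ℝ) b

/-- The tensor-product mesh with breakpoints `G k` in direction `k`. -/
def tensorMesh {d : ℕ} (G : Fin d → Finset ℕ) : Set (Box d) :=
  {E | ∀ k, GridComponent (G k) (E k)}

lemma IsTensorMesh.exists_eq_tensorMesh {d : ℕ} {N : Fin d → ℕ} {M : Set (Box d)}
    (h : IsTensorMesh N M) : ∃ G, (∀ k, 0 ∈ G k ∧ N k ∈ G k) ∧ M = tensorMesh G := by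
  obtain ⟨G, hG, rfl⟩ := h
  refine ⟨G, fun k => ⟨(hG k).1, (hG k).2.1⟩, ?_⟩
  simp [tensorMesh, GridComponent, Consecutive, and_assoc]

lemma GridComponent.subset_closure (hS : GridComponent G S) (hS' : GridComponent G S')
    (hy : y ∈ S) (hy' : y ∈ closure S') : S ⊆ closure S' := by
  rcases hS with ⟨n, -, rfl⟩ | ⟨a, b, ⟨-, -, -, hab⟩, rfl⟩
  · obtain rfl : y = n := hy
    exact singleton_subset_iff.2 hy'
  rcases hS' with ⟨n, hn, rfl⟩ | ⟨c, e, ⟨hc, he, hce, -⟩, rfl⟩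
  · rw [closure_singleton] at hy'
    obtain rfl : y = n := hy'
    rcases hab n hn with h | h
    exacts [absurd hy.1 (not_lt.2 (mod_cast h)), absurd hy.2 (not_lt.2 (mod_cast h))]
  · rw [closure_Ioo (mod_cast hce.ne)] at hy' ⊢
    have hca : c ≤ a := (hab c hc).resolve_right fun h =>
      absurd (hy'.1.trans_lt hy.2) (not_lt.2 (mod_cast h))
    have hbe : b ≤ e := (hab e he).resolve_left fun h =>
      absurd (hy.1.trans_le hy'.2) (not_lt.2 (mod_cast h))
    exact Ioo_subset_Icc_self.trans (Icc_subset_Icc (mod_cast hca) (mod_cast hbe))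

lemma GridComponent.exists_Ioo (hG : (G : Set ℕ).Nontrivial) (hS : GridComponent G S) :
    ∃ a b : ℕ, Consecutive G a b ∧ S ⊆ closure (Ioo (a : ℝ) b) := by
  rcases hS with ⟨n, hn, rfl⟩ | ⟨a, b, h, rfl⟩
  · obtain ⟨a, b, h, hnab⟩ := exists_consecutive_endpoint hG hn
    have hab : (a : ℝ) < b := mod_cast h.2.2.1
    refine ⟨a, b, h, ?_⟩
    rw [closure_Ioo hab.ne, singleton_subset_iff]
    rcases hnab with rfl | rfl
    exacts [left_mem_Icc.2 hab.le, right_mem_Icc.2 hab.le]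
  · exact ⟨a, b, h, _root_.subset_closure⟩

end TensorMesh

section Invariants

variable {d : ℕ} {N : Fin d → ℕ} {G : Fin d → Finset ℕ} {M : Set (Box d)} {E E' F Q : Box d}
  {X : Set ℝ} {l : Fin d} {a m b : ℕ}

/-- A mesh with dyadic interval components that satisfies the frontier condition: an entity
meeting the closure of another one is contained in it. -/
structure IsDyadicMesh (G : Fin d → Finset ℕ) (M : Set (Box d)) : Prop where
  component : ∀ E ∈ M, ∀ k ∉ singDirs E, ∃ a b, Dyadic (G k) a b ∧ E k = Ioo (a : ℝ) b
  frontier : ∀ E ∈ M, ∀ F ∈ M, ∀ y ∈ toSet E, y ∈ toSet (closureBox F) → E ≤ closureBox F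

/-- Whenever an entity has a singleton component in direction `j`, it lies in the closure of a
hyperface orthogonal to `j`. -/
def HasHyperfaces (M : Set (Box d)) : Prop :=
  ∀ E ∈ M, ∀ j ∈ singDirs E, ∃ F ∈ M, singDirs F = {j} ∧ E ≤ closureBox F

lemma isDyadicMesh_tensorMesh (G : Fin d → Finset ℕ) : IsDyadicMesh G (tensorMesh G) where
  component E hE k hk := by
    rcases hE k with ⟨n, -, h⟩ | ⟨a, b, hab, h⟩
    exacts [absurd ⟨_, h⟩ hk, ⟨a, b, .base hab, h⟩]
  frontier E hE F hF y hyE hyF k :=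
    (hE k).subset_closure (hF k) (mem_toSet.1 hyE k) (mem_toSet.1 hyF k)

lemma hasHyperfaces_tensorMesh (hG : ∀ k, (G k : Set ℕ).Nontrivial) :
    HasHyperfaces (tensorMesh G) := by
  intro E hE j hj
  choose a b hab hsub using fun k => (hE k).exists_Ioo (hG k)
  let Q : Box d := fun k => Ioo (a k : ℝ) (b k)
  have hQ : singDirs Q = ∅ := eq_empty_of_forall_notMem fun k => notMem_singDirs_of_eq_Ioo rfl
  rcases hE j with ⟨n, hn, hEj⟩ | ⟨c, e, -, hEj⟩
  swap
  · exact absurd hj (notMem_singDirs_of_eq_Ioo hEj)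
  refine ⟨Function.update Q j {(n : ℝ)}, fun k => ?_, ?_,
    le_closureBox_update_iff.2 ⟨hEj ▸ subset_closure, fun k _ => hsub k⟩⟩
  · rcases eq_or_ne k j with rfl | hk
    · exact .inl ⟨n, hn, Function.update_self ..⟩
    · exact .inr ⟨a k, b k, hab k, Function.update_of_ne hk ..⟩
  · rw [singDirs_update_singleton, hQ, insert_empty_eq]

/-- The data of a bisection: `Q` is a cell of `M` whose component in direction `l` is `(a, b)`, with
integer midpoint `m`. -/
structure IsBisectable (M : Set (Box d)) (Q : Box d) (l : Fin d) (a m b : ℕ) : Prop where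
  mem : Q ∈ M
  singDirs_eq : singDirs Q = ∅
  component_eq : Q l = Ioo (a : ℝ) b
  lt : a < b
  add_eq : a + b = 2 * m

lemma BisectStep.exists_isBisectable {M' : Set (Box d)} (h : BisectStep N M M') :
    ∃ Q l a m b, IsBisectable M Q l a m b ∧ M' = midSplit M Q l m (closureBox Q) := by
  obtain ⟨Q, hQM, l, a, b, m, hQ, hQl, hm, rfl⟩ := h
  have hcell : ∀ k, k ∉ singDirs Q := fun k => by
    obtain ⟨c, e, -, -, h⟩ := hQ k
    exact notMem_singDirs_of_eq_Ioo h
  refine ⟨Q, l, a, m, b, ⟨hQM, eq_empty_of_forall_notMem hcell, hQl, ?_, hm⟩, rfl⟩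
  obtain ⟨c, e, hce, -, h⟩ := hQ l
  have hab : (a : ℝ) < b := by
    rw [← nonempty_Ioo, ← hQl, h, nonempty_Ioo]
    exact mod_cast hce
  exact mod_cast hab

namespace IsBisectable

lemma left_lt_mid (h : IsBisectable M Q l a m b) : (a : ℝ) < m := by
  have := h.lt
  have := h.add_eq
  exact mod_cast (by omega : a < m)

lemma mid_lt_right (h : IsBisectable M Q l a m b) : (m : ℝ) < b := by
  have := h.lt
  have := h.add_eq
  exact mod_cast (by omega : m < b)

lemma subset_Icc (h : IsBisectable M Q l a m b) (hE : E ≤ closureBox Q) : E l ⊆ Icc (a : ℝ) b := by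
  simpa only [closureBox, h.component_eq, closure_Ioo (mod_cast h.lt.ne : (a : ℝ) ≠ b)] using hE l

lemma mem_midSplit (h : IsBisectable M Q l a m b) :
    E' ∈ midSplit M Q l m (closureBox Q) ↔
      (E' ∈ M ∧ ¬(E' ≤ closureBox Q ∧ E' l = Q l)) ∨
      ∃ E ∈ M, E ≤ closureBox Q ∧ E l = Q l ∧
        ∃ X ∈ bisectionPieces (a : ℝ) m b, E' = Function.update E l X := by
  have hab : (a : ℝ) < b := mod_cast h.lt
  have hle (E : Box d) : (∀ k, E k ⊆ closureBox Q k) ↔ E ≤ closureBox Q := Iff.rfl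
  simp only [midSplit, bisectionPieces, h.component_eq, csInf_Ioo hab, csSup_Ioo hab, hle,
    mem_union, mem_sdiff, mem_ofPred_eq, mem_iUnion, mem_insert_iff, mem_singleton_iff,
    exists_prop, exists_eq_or_imp, exists_eq_left, and_assoc]
  exact or_congr_left (and_congr_right fun hE' => by simp only [hE', true_and])

lemma update_le (h : IsBisectable M Q l a m b) (hEl : E l = Q l)
    (hX : X ∈ bisectionPieces (a : ℝ) m b) : Function.update E l X ≤ E := by
  rw [update_le_self_iff, hEl, h.component_eq]
  exact subset_of_mem_bisectionPieces h.left_lt_mid h.mid_lt_right hX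

lemma exists_parent (h : IsBisectable M Q l a m b) (hE' : E' ∈ midSplit M Q l m (closureBox Q)) :
    ∃ E ∈ M, E' ≤ E := by
  rcases h.mem_midSplit.1 hE' with ⟨hE, -⟩ | ⟨E, hE, -, hEl, X, hX, rfl⟩
  · exact ⟨E', hE, le_rfl⟩
  · exact ⟨E, hE, h.update_le hEl hX⟩

/-- By laminarity of dyadic intervals, an interval component inside the closure of `Q l` is either
`Q l` itself, in which case the entity is split, or contained in one half of `Q l`. -/
lemma liesOnSide (h : IsBisectable M Q l a m b) (hM : IsDyadicMesh G M)
    (hE' : E' ∈ midSplit M Q l m (closureBox Q)) (hEQ : E' ≤ closureBox Q) :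
    LiesOnSide m (E' l) := by
  rcases h.mem_midSplit.1 hE' with ⟨hE, hns⟩ | ⟨E, -, -, -, X, hX, rfl⟩
  swap
  · rw [Function.update_self]
    exact liesOnSide_of_mem_bisectionPieces hX
  by_cases hl : l ∈ singDirs E'
  · obtain ⟨r, hr⟩ := hl
    exact hr ▸ liesOnSide_singleton m r
  obtain ⟨c, e, hce, hEl⟩ := hM.component E' hE l hl
  obtain ⟨a', b', hab', hQl⟩ := hM.component Q h.mem l (h.singDirs_eq ▸ notMem_empty l)
  obtain ⟨rfl, rfl⟩ := natCast_Ioo_inj h.lt hab'.lt (h.component_eq.symm.trans hQl)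
  have hsub : Icc (c : ℝ) e ⊆ Icc (a : ℝ) b := by
    rw [← closure_Ioo (mod_cast hce.lt.ne), ← hEl]
    exact closure_minimal (h.subset_Icc hEQ) isClosed_Icc
  obtain ⟨hac, heb⟩ := (Icc_subset_Icc_iff (mod_cast hce.lt.le)).1 hsub
  rcases hab'.eq_or_le_midpoint_or_midpoint_le hce h.add_eq (mod_cast hac) (mod_cast heb) with
    ⟨rfl, rfl⟩ | hem | hmc
  · exact absurd ⟨hEQ, hEl.trans hQl.symm⟩ hns
  · exact .inl (hEl ▸ fun z hz => hz.2.trans_le (mod_cast hem))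
  · exact .inr (.inr (hEl ▸ fun z hz => lt_of_le_of_lt (mod_cast hmc) hz.1))

lemma isDyadicMesh_midSplit (h : IsBisectable M Q l a m b) (hM : IsDyadicMesh G M) :
    IsDyadicMesh G (midSplit M Q l m (closureBox Q)) where
  component E' hE' k hk := by
    rcases h.mem_midSplit.1 hE' with ⟨hE, -⟩ | ⟨E, hE, -, -, X, hX, rfl⟩
    · exact hM.component E' hE k hk
    rcases eq_or_ne k l with rfl | hkl
    · obtain ⟨a', b', hab', hQk⟩ := hM.component Q h.mem k (h.singDirs_eq ▸ notMem_empty k)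
      obtain ⟨rfl, rfl⟩ := natCast_Ioo_inj h.lt hab'.lt (h.component_eq.symm.trans hQk)
      rcases hX with rfl | rfl | rfl
      · exact ⟨a, m, hab'.left h.add_eq, Function.update_self ..⟩
      · exact absurd ⟨_, Function.update_self ..⟩ hk
      · exact ⟨m, b, hab'.right h.add_eq, Function.update_self ..⟩
    · rw [mem_singDirs_update_of_ne hkl] at hk
      rw [Function.update_of_ne hkl]
      exact hM.component E hE k hk
  frontier E' hE' F' hF' y hyE' hyF' := by
    obtain ⟨E, hE, hE'E⟩ := h.exists_parent hE'
    have hyE : y ∈ toSet E := pi_mono (fun k _ => hE'E k) hyE'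
    rcases h.mem_midSplit.1 hF' with ⟨hF, -⟩ | ⟨F, hF, hFQ, hFl, X, hX, rfl⟩
    · exact hE'E.trans (hM.frontier E hE F' hF y hyE hyF')
    have hyF : y ∈ toSet (closureBox F) :=
      pi_mono (fun k _ => closureBox_mono (h.update_le hFl hX) k) hyF'
    have hE'F : E' ≤ closureBox F := hE'E.trans (hM.frontier E hE F hF y hyE hyF)
    have hE'Q : E' ≤ closureBox Q := le_closureBox_trans hE'F hFQ
    have hyX : y l ∈ closure X := by
      simpa only [closureBox, Function.update_self] using mem_toSet.1 hyF' l
    exact le_closureBox_update_iff.2 ⟨(h.liesOnSide hM hE' hE'Q).subset_closure_piece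
      h.left_lt_mid h.mid_lt_right (h.subset_Icc hE'Q) hX ⟨y l, mem_toSet.1 hyE' l, hyX⟩,
      fun k _ => hE'F k⟩

lemma exists_cover (h : IsBisectable M Q l a m b) (hM : IsDyadicMesh G M) (hF : F ∈ M)
    (hE' : E' ∈ midSplit M Q l m (closureBox Q)) (hE'F : E' ≤ closureBox F) :
    ∃ F' ∈ midSplit M Q l m (closureBox Q), singDirs F' = singDirs F ∧ E' ≤ closureBox F' := by
  by_cases hsplit : F ≤ closureBox Q ∧ F l = Q l
  swap
  · exact ⟨F, h.mem_midSplit.2 (.inl ⟨hF, hsplit⟩), rfl, hE'F⟩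
  obtain ⟨hFQ, hFl⟩ := hsplit
  have hE'Q := le_closureBox_trans hE'F hFQ
  obtain ⟨X, hX, hX1, hE'X⟩ := (h.liesOnSide hM hE' hE'Q).exists_piece_subset_closure
    h.left_lt_mid h.mid_lt_right (h.subset_Icc hE'Q)
  refine ⟨Function.update F l X, h.mem_midSplit.2 (.inr ⟨F, hF, hFQ, hFl, X, hX, rfl⟩),
    singDirs_update_of_ne_singleton hX1 (notMem_singDirs_of_eq_Ioo (hFl.trans h.component_eq)),
    le_closureBox_update_iff.2 ⟨hE'X, fun k _ => hE'F k⟩⟩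

lemma hasHyperfaces_midSplit (h : IsBisectable M Q l a m b) (hM : IsDyadicMesh G M)
    (hH : HasHyperfaces M) : HasHyperfaces (midSplit M Q l m (closureBox Q)) := by
  intro E' hE' j hj
  suffices (∃ F ∈ M, singDirs F = {j} ∧ E' ≤ closureBox F) ∨
      ∃ F ∈ midSplit M Q l m (closureBox Q), singDirs F = {j} ∧ E' ≤ closureBox F by
    rcases this with ⟨F, hF, hFj, hE'F⟩ | hF
    · obtain ⟨F', hF', hF'F, hE'F'⟩ := h.exists_cover hM hF hE' hE'F
      exact ⟨F', hF', hF'F.trans hFj, hE'F'⟩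
    · exact hF
  rcases h.mem_midSplit.1 hE' with ⟨hE, -⟩ | ⟨E, hE, hEQ, hEl, X, hX, rfl⟩
  · exact .inl (hH E' hE j hj)
  by_cases hjE : j ∈ singDirs E
  · obtain ⟨F, hF, hFj, hEF⟩ := hH E hE j hjE
    exact .inl ⟨F, hF, hFj, (h.update_le hEl hX).trans hEF⟩
  · obtain rfl : j = l := by
      by_contra hjl
      exact hjE ((mem_singDirs_update_of_ne hjl).1 hj)
    obtain ⟨r, hr⟩ := hj
    rw [Function.update_self] at hr
    subst hr
    refine .inr ⟨Function.update Q j {r}, h.mem_midSplit.2 (.inr ⟨Q, h.mem,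
      le_closureBox_self Q, rfl, {r}, hX, rfl⟩), ?_, ?_⟩
    · rw [singDirs_update_singleton, h.singDirs_eq, insert_empty_eq]
    · refine le_closureBox_update_iff.2 ⟨?_, fun k hk => ?_⟩
      · rw [Function.update_self]
        exact subset_closure
      · rw [Function.update_of_ne hk]
        exact hEQ k

end IsBisectable

lemma TMesh.exists_isDyadicMesh (T : TMesh d N) : ∃ G, IsDyadicMesh G T.entities := by
  obtain ⟨M₀, hM₀, hreach⟩ := T.constructed
  obtain ⟨G, -, rfl⟩ := hM₀.exists_eq_tensorMesh
  refine ⟨G, ?_⟩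
  generalize T.entities = M at hreach ⊢
  induction hreach with
  | refl => exact isDyadicMesh_tensorMesh G
  | tail _ hstep ih =>
    obtain ⟨Q, l, a, m, b, h, rfl⟩ := hstep.exists_isBisectable
    exact h.isDyadicMesh_midSplit ih

lemma TMesh.hasHyperfaces (T : TMesh d N) (hN : ∀ k, 0 < N k) : HasHyperfaces T.entities := by
  obtain ⟨M₀, hM₀, hreach⟩ := T.constructed
  obtain ⟨G, hG, rfl⟩ := hM₀.exists_eq_tensorMesh
  have hGnt (k) : (G k : Set ℕ).Nontrivial := ⟨0, (hG k).1, N k, (hG k).2, (hN k).ne⟩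
  suffices IsDyadicMesh G T.entities ∧ HasHyperfaces T.entities from this.2
  generalize T.entities = M at hreach ⊢
  induction hreach with
  | refl => exact ⟨isDyadicMesh_tensorMesh G, hasHyperfaces_tensorMesh hGnt⟩
  | tail _ hstep ih =>
    obtain ⟨Q, l, a, m, b, h, rfl⟩ := hstep.exists_isBisectable
    exact ⟨h.isDyadicMesh_midSplit ih.1, h.hasHyperfaces_midSplit ih.1 ih.2⟩

end Invariants

section Entities

variable {d : ℕ} {N : Fin d → ℕ} {T : TMesh d N} {E F J : Box d} {x : Fin d → ℝ} {i j k : Fin d}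

lemma IsMeshEntity.exists_eq_singleton (hE : IsMeshEntity N E) (hk : k ∈ singDirs E) :
    ∃ n : ℕ, E k = {(n : ℝ)} := by
  rcases hE k with ⟨n, -, h⟩ | ⟨a, b, -, -, h⟩
  exacts [⟨n, h⟩, absurd hk (notMem_singDirs_of_eq_Ioo h)]

lemma IsMeshEntity.exists_eq_Ioo (hE : IsMeshEntity N E) (hk : k ∉ singDirs E) :
    ∃ a b : ℕ, a < b ∧ E k = Ioo (a : ℝ) b := by
  rcases hE k with ⟨n, -, h⟩ | ⟨a, b, hab, -, h⟩
  exacts [absurd ⟨_, h⟩ hk, ⟨a, b, hab, h⟩]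

lemma IsMeshEntity.isOpen (hE : IsMeshEntity N E) (hk : k ∉ singDirs E) : IsOpen (E k) := by
  obtain ⟨a, b, -, h⟩ := hE.exists_eq_Ioo hk
  exact h ▸ isOpen_Ioo

lemma IsMeshEntity.exists_natCast_eq (hE : IsMeshEntity N E) (hx : x ∈ toSet E)
    (hk : k ∈ singDirs E) : ∃ n : ℕ, x k = n := by
  obtain ⟨n, h⟩ := hE.exists_eq_singleton hk
  exact ⟨n, mem_singleton_iff.1 (h ▸ mem_toSet.1 hx k)⟩

lemma IsMeshEntity.toSet_nonempty (hE : IsMeshEntity N E) : (toSet E).Nonempty := by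
  refine univ_pi_nonempty_iff.2 fun k => ?_
  rcases hE k with ⟨n, -, h⟩ | ⟨a, b, hab, -, h⟩
  exacts [h ▸ singleton_nonempty _, h ▸ nonempty_Ioo.2 (mod_cast hab)]

lemma IsMeshEntity.mem_of_le_closureBox (hE : IsMeshEntity N E) (hF : IsMeshEntity N F)
    (hEF : E ≤ closureBox F) (hx : x ∈ toSet E) (hk : k ∈ singDirs E → k ∈ singDirs F) :
    x k ∈ F k := by
  by_cases hkF : k ∈ singDirs F
  · obtain ⟨r, hr⟩ := hkF
    have := hEF k (mem_toSet.1 hx k)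
    rwa [closureBox, hr, closure_singleton, ← hr] at this
  obtain ⟨a, b, hab, hFk⟩ := hF.exists_eq_Ioo hkF
  have hint : E k ⊆ interior (closure (F k)) :=
    (hE.isOpen (mt hk hkF)).subset_interior_iff.2 (hEF k)
  rw [hFk, closure_Ioo (mod_cast hab.ne), interior_Icc, ← hFk] at hint
  exact hint (mem_toSet.1 hx k)

namespace TMesh

lemma eq_of_mem (hE : E ∈ T.entities) (hF : F ∈ T.entities) (hxE : x ∈ toSet E)
    (hxF : x ∈ toSet F) : E = F := by
  by_contra hne
  exact (T.pairwise_disjoint E hE F hF hne).le ⟨hxE, hxF⟩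

lemma exists_mem_toSet (T : TMesh d N) (hx : x ∈ domain N) : ∃ E ∈ T.entities, x ∈ toSet E := by
  simpa only [← T.union_eq, mem_iUnion, exists_prop] using hx

lemma le_closureBox (hE : E ∈ T.entities) (hF : F ∈ T.entities) (hxE : x ∈ toSet E)
    (hxF : x ∈ toSet (closureBox F)) : E ≤ closureBox F :=
  let ⟨_, hG⟩ := T.exists_isDyadicMesh
  hG.frontier E hE F hF x hxE hxF

lemma toSet_subset_frontier_iff (hE : E ∈ T.entities) (hF : F ∈ T.entities) (hEF : E ≠ F) :
    toSet E ⊆ frontier (toSet F) ↔ E ≤ closureBox F := by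
  refine ⟨fun h => le_of_toSet_subset (T.mem_entity E hE).toSet_nonempty ?_, fun h x hx => ⟨?_, ?_⟩⟩
  · rw [toSet_closureBox]
    exact h.trans frontier_subset_closure
  · rw [← toSet_closureBox]
    exact pi_mono (fun k _ => h k) hx
  · exact fun hxF => hEF (eq_of_mem hE hF hx (interior_subset hxF))

lemma exists_mem_forall_mem_Ioo (hE : E ∈ T.entities) (hbd : ¬ toSet E ⊆ bdryDomain N) :
    ∃ x ∈ toSet E, ∀ k, x k ∈ Ioo (0 : ℝ) (N k) := by
  obtain ⟨x, hxE, hx⟩ := not_subset.1 hbd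
  have hxN : x ∈ domain N := T.union_eq ▸ mem_biUnion hE hxE
  have hint : x ∈ interior (domain N) := by
    by_contra h
    exact hx ⟨subset_closure hxN, h⟩
  rw [domain, interior_pi_set finite_univ] at hint
  exact ⟨x, hxE, fun k => by simpa only [interior_Icc] using hint k (mem_univ k)⟩

end TMesh

lemma mem_Hdim_self_iff : F ∈ Hdim T d ↔ F ∈ T.entities ∧ singDirs F = ∅ := by
  simp only [Hdim, mem_ofPred_eq, Nat.sub_self, ncard_eq_zero (toFinite _)]

lemma mem_Hdim_sub_one_iff (hd : 1 ≤ d) :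
    F ∈ Hdim T (d - 1) ↔ F ∈ T.entities ∧ ∃ l, singDirs F = {l} := by
  simp only [Hdim, mem_ofPred_eq, Nat.sub_sub_self hd, ncard_eq_one]

lemma ncard_singDirs_of_mem_Hdim_sub_two (hd : 2 ≤ d) (hJ : J ∈ Hdim T (d - 2)) :
    (singDirs J).ncard = 2 :=
  hJ.2.trans (Nat.sub_sub_self hd)

lemma exists_singDirs_eq_pair (hJ : (singDirs J).ncard = 2) (hi : i ∈ singDirs J) :
    ∃ j, i ≠ j ∧ singDirs J = {i, j} := by
  obtain ⟨a, b, hab, h⟩ := ncard_eq_two.1 hJ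
  rw [h] at hi
  rcases hi with rfl | rfl
  exacts [⟨b, hab, h⟩, ⟨a, hab.symm, h.trans (pair_comm a i)⟩]

lemma singDirs_eq_pair (hJ : (singDirs J).ncard = 2) (hi : i ∈ singDirs J) (hj : j ∈ singDirs J)
    (hij : i ≠ j) : singDirs J = {i, j} := by
  obtain ⟨j', -, h⟩ := exists_singDirs_eq_pair hJ hi
  obtain rfl : j = j' := by
    simpa only [h, mem_insert_iff, hij.symm, false_or, mem_singleton_iff] using hj
  exact h

end Entities

section Arms

variable {d : ℕ} {N : Fin d → ℕ} {T : TMesh d N} {F J Q Q' : Box d} {x : Fin d → ℝ}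
  {i j k : Fin d} {ε δ : ℤˣ}

/-- The end point `x ± eᵢ / 2` of the arm leaving `x` in direction `±i`; the sign `ε` is encoded
as a unit of `ℤ`. -/
noncomputable def arm (x : Fin d → ℝ) (i : Fin d) (ε : ℤˣ) : Fin d → ℝ :=
  Function.update x i (x i + ((ε : ℤ) : ℝ) / 2)

lemma arm_self (x : Fin d → ℝ) (i : Fin d) (ε : ℤˣ) :
    arm x i ε i = x i + ((ε : ℤ) : ℝ) / 2 :=
  Function.update_self ..

lemma arm_of_ne (h : k ≠ i) (ε : ℤˣ) : arm x i ε k = x k :=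
  Function.update_of_ne h ..

lemma apply_mem_of_arm_mem (h : k ≠ i) (hp : arm x i ε ∈ toSet F) : x k ∈ F k := by
  simpa only [arm_of_ne h] using mem_toSet.1 hp k

lemma arm_comm (hij : i ≠ j) (x : Fin d → ℝ) (ε δ : ℤˣ) :
    arm (arm x i ε) j δ = arm (arm x j δ) i ε := by
  simp only [arm, Function.update_of_ne hij, Function.update_of_ne hij.symm]
  exact Function.update_comm hij _ _ x

lemma natCast_add_half_mem_Ioo_iff {n a b : ℕ} :
    (n : ℝ) + ((ε : ℤ) : ℝ) / 2 ∈ Ioo (a : ℝ) b ↔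
      2 * (a : ℤ) < 2 * n + ε ∧ 2 * (n : ℤ) + ε < 2 * b := by
  rw [mem_Ioo, ← @Int.cast_lt ℝ, ← @Int.cast_lt ℝ]
  push_cast
  constructor <;> rintro ⟨h₁, h₂⟩ <;> constructor <;> linarith

namespace IsMeshEntity

lemma notMem_singDirs_of_arm_mem (hF : IsMeshEntity N F) {n : ℕ} (hn : x i = n)
    (hp : arm x i ε ∈ toSet F) : i ∉ singDirs F := by
  intro hi
  obtain ⟨m, hm⟩ := hF.exists_natCast_eq hp hi
  rw [arm_self, hn] at hm
  have hm' : (2 * n + ε : ℤ) = 2 * m := by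
    rw [← @Int.cast_inj ℝ]
    push_cast
    linarith
  rcases Int.isUnit_iff.1 ε.isUnit with h | h <;> omega

lemma mem_closureBox_of_arm_mem (hF : IsMeshEntity N F) {n : ℕ} (hn : x i = n)
    (hp : arm x i ε ∈ toSet F) : x ∈ toSet (closureBox F) := by
  refine mem_toSet.2 fun k => ?_
  rcases eq_or_ne k i with rfl | hk
  · obtain ⟨a, b, hab, hFk⟩ := hF.exists_eq_Ioo (hF.notMem_singDirs_of_arm_mem hn hp)
    have hpk := mem_toSet.1 hp k
    rw [arm_self, hn, hFk, natCast_add_half_mem_Ioo_iff] at hpk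
    rw [closureBox, hFk, closure_Ioo (mod_cast hab.ne), hn]
    have : a ≤ n ∧ n ≤ b := by
      rcases Int.isUnit_iff.1 ε.isUnit with h | h <;> omega
    exact ⟨mod_cast this.1, mod_cast this.2⟩
  · exact subset_closure (apply_mem_of_arm_mem hk hp)

lemma arm_mem (hF : IsMeshEntity N F) {n : ℕ} (hn : x i = n) (hi : i ∉ singDirs F)
    (hx : x ∈ toSet F) (ε : ℤˣ) : arm x i ε ∈ toSet F := by
  refine mem_toSet.2 fun k => ?_
  have hxk := mem_toSet.1 hx k
  rcases eq_or_ne k i with rfl | hk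
  · obtain ⟨a, b, -, hFk⟩ := hF.exists_eq_Ioo hi
    rw [hFk, hn, mem_Ioo, Nat.cast_lt, Nat.cast_lt] at hxk
    rw [arm_self, hn, hFk, natCast_add_half_mem_Ioo_iff]
    rcases Int.isUnit_iff.1 ε.isUnit with h | h <;> omega
  · exact (arm_of_ne hk ε).symm ▸ hxk

lemma exists_arm_mem (hF : IsMeshEntity N F) {n : ℕ} (hn : x i = n) (hi : i ∉ singDirs F)
    (hxi : x i ∈ closure (F i)) (hx : ∀ k ≠ i, x k ∈ F k) : ∃ ε, arm x i ε ∈ toSet F := by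
  obtain ⟨a, b, hab, hFi⟩ := hF.exists_eq_Ioo hi
  obtain ⟨ε, hε⟩ : ∃ ε : ℤˣ, (n : ℝ) + ((ε : ℤ) : ℝ) / 2 ∈ Ioo (a : ℝ) b := by
    simp only [natCast_add_half_mem_Ioo_iff]
    rw [hFi, hn, closure_Ioo (mod_cast hab.ne), mem_Icc, Nat.cast_le, Nat.cast_le] at hxi
    rcases hxi.2.lt_or_eq with h | h
    · exact ⟨1, by push_cast; omega⟩
    · exact ⟨-1, by push_cast; omega⟩
  refine ⟨ε, mem_toSet.2 fun k => ?_⟩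
  rcases eq_or_ne k i with rfl | hk
  · rwa [arm_self, hn, hFi]
  · exact (arm_of_ne hk ε).symm ▸ hx k hk

lemma mem_of_arm_mem_of_arm_mem (hF : IsMeshEntity N F) {n : ℕ} (hn : x i = n)
    (hp : arm x i ε ∈ toSet F) (hq : arm x j δ ∈ toSet F) (hne : (i, ε) ≠ (j, δ)) :
    x ∈ toSet F := by
  refine mem_toSet.2 fun k => ?_
  by_cases hki : k = i
  swap
  · exact apply_mem_of_arm_mem hki hp
  by_cases hkj : k = j
  swap
  · exact apply_mem_of_arm_mem hkj hq
  obtain rfl : i = k := hki.symm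
  obtain rfl : i = j := hkj
  have hpi := mem_toSet.1 hp i
  have hqi := mem_toSet.1 hq i
  have hεδ : (ε : ℤ) ≠ δ := fun h => hne (by rw [Units.ext h])
  obtain ⟨a, b, -, hFi⟩ := hF.exists_eq_Ioo (hF.notMem_singDirs_of_arm_mem hn hp)
  rw [arm_self, hn, hFi, natCast_add_half_mem_Ioo_iff] at hpi hqi
  rw [hFi, hn, mem_Ioo, Nat.cast_lt, Nat.cast_lt]
  rcases Int.isUnit_iff.1 ε.isUnit with h | h <;> rcases Int.isUnit_iff.1 δ.isUnit with h' | h' <;>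
    omega

end IsMeshEntity

namespace TMesh

lemma le_closureBox_of_arm_mem (hJ : J ∈ T.entities) (hx : x ∈ toSet J) (hi : i ∈ singDirs J)
    (hF : F ∈ T.entities) (hp : arm x i ε ∈ toSet F) : J ≤ closureBox F := by
  obtain ⟨n, hn⟩ := (T.mem_entity J hJ).exists_natCast_eq hx hi
  exact le_closureBox hJ hF hx ((T.mem_entity F hF).mem_closureBox_of_arm_mem hn hp)

lemma singDirs_subset_of_arm_mem (hJ : J ∈ T.entities) (hx : x ∈ toSet J) (hi : i ∈ singDirs J)
    (hF : F ∈ T.entities) (hp : arm x i ε ∈ toSet F) : singDirs F ⊆ singDirs J \ {i} := by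
  obtain ⟨n, hn⟩ := (T.mem_entity J hJ).exists_natCast_eq hx hi
  refine subset_sdiff_singleton (singDirs_subset_of_le_closureBox ⟨x, hx⟩ ?_)
    ((T.mem_entity F hF).notMem_singDirs_of_arm_mem hn hp)
  exact le_closureBox_of_arm_mem hJ hx hi hF hp

lemma notMem_of_arm_mem (hJ : J ∈ T.entities) (hx : x ∈ toSet J) (hi : i ∈ singDirs J)
    (hF : F ∈ T.entities) (hp : arm x i ε ∈ toSet F) : x ∉ toSet F := by
  intro hxF
  obtain rfl := eq_of_mem hJ hF hx hxF
  exact (singDirs_subset_of_arm_mem hJ hx hi hJ hp hi).2 rfl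

lemma arm_unique (hJ : J ∈ T.entities) (hx : x ∈ toSet J) (hi : i ∈ singDirs J)
    (hF : F ∈ T.entities) (hp : arm x i ε ∈ toSet F) (hq : arm x j δ ∈ toSet F) :
    i = j ∧ ε = δ := by
  rw [← Prod.mk_inj]
  by_contra hne
  obtain ⟨n, hn⟩ := (T.mem_entity J hJ).exists_natCast_eq hx hi
  exact notMem_of_arm_mem hJ hx hi hF hp
    ((T.mem_entity F hF).mem_of_arm_mem_of_arm_mem hn hp hq hne)

lemma exists_arm_mem_of_le_closureBox (hJ : J ∈ T.entities) (hx : x ∈ toSet J)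
    (hi : i ∈ singDirs J) (hF : F ∈ T.entities) (hJF : J ≤ closureBox F) (hiF : i ∉ singDirs F)
    (hxF : ∀ k ∈ singDirs J, k ≠ i → x k ∈ F k) : ∃ ε, arm x i ε ∈ toSet F := by
  obtain ⟨n, hn⟩ := (T.mem_entity J hJ).exists_natCast_eq hx hi
  refine (T.mem_entity F hF).exists_arm_mem hn hiF (hJF i (mem_toSet.1 hx i)) fun k hki => ?_
  by_cases hk : k ∈ singDirs J
  · exact hxF k hk hki
  · exact (T.mem_entity J hJ).mem_of_le_closureBox (T.mem_entity F hF) hJF hx (absurd · hk)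

lemma exists_arm_mem_of_singDirs_eq (hJ : J ∈ T.entities) (hx : x ∈ toSet J)
    (hJij : singDirs J = {i, j}) (hij : i ≠ j) (hF : F ∈ T.entities) (hFj : singDirs F = {j})
    (hJF : J ≤ closureBox F) : ∃ ε, arm x i ε ∈ toSet F := by
  refine exists_arm_mem_of_le_closureBox hJ hx (hJij ▸ .inl rfl) hF hJF (hFj ▸ hij) ?_
  intro k hk hki
  have hkF : k ∈ singDirs F := hFj ▸ (hJij ▸ hk : k ∈ ({i, j} : Set _)).resolve_left hki
  exact (T.mem_entity J hJ).mem_of_le_closureBox (T.mem_entity F hF) hJF hx fun _ => hkF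

lemma exists_entity_arm_mem (hJ : J ∈ T.entities) (hx : x ∈ toSet J) (hi : i ∈ singDirs J)
    (hxN : ∀ k, x k ∈ Ioo (0 : ℝ) (N k)) (ε : ℤˣ) : ∃ F ∈ T.entities, arm x i ε ∈ toSet F := by
  obtain ⟨n, hn⟩ := (T.mem_entity J hJ).exists_natCast_eq hx hi
  refine T.exists_mem_toSet (mem_univ_pi.2 fun k => Ioo_subset_Icc_self ?_)
  have hk := hxN k
  rcases eq_or_ne k i with rfl | hki
  · rw [hn, mem_Ioo, ← Nat.cast_zero, Nat.cast_lt, Nat.cast_lt] at hk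
    rw [arm_self, hn, ← Nat.cast_zero, natCast_add_half_mem_Ioo_iff]
    rcases Int.isUnit_iff.1 ε.isUnit with h | h <;> omega
  · rwa [arm_of_ne hki]

/-- The two arms bound a common quadrant, whose far corner belongs to the cells of both. -/
lemma eq_of_arm_mem_of_arm_mem (hJ : J ∈ T.entities) (hx : x ∈ toSet J) (hi : i ∈ singDirs J)
    (hj : j ∈ singDirs J) (hij : i ≠ j) (hQ : Q ∈ Hdim T d) (hQ' : Q' ∈ Hdim T d)
    (hp : arm x i ε ∈ toSet Q) (hp' : arm x j δ ∈ toSet Q') : Q = Q' := by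
  rw [mem_Hdim_self_iff] at hQ hQ'
  obtain ⟨n, hn⟩ := (T.mem_entity J hJ).exists_natCast_eq hx hi
  obtain ⟨n', hn'⟩ := (T.mem_entity J hJ).exists_natCast_eq hx hj
  have hquad : arm (arm x i ε) j δ ∈ toSet Q :=
    (T.mem_entity Q hQ.1).arm_mem ((arm_of_ne hij.symm ε).trans hn') (hQ.2 ▸ notMem_empty j) hp δ
  have hquad' : arm (arm x j δ) i ε ∈ toSet Q' :=
    (T.mem_entity Q' hQ'.1).arm_mem ((arm_of_ne hij δ).trans hn) (hQ'.2 ▸ notMem_empty i) hp' ε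
  exact eq_of_mem hQ.1 hQ'.1 hquad (arm_comm hij x ε δ ▸ hquad')

end TMesh

end Arms

section Valence

variable {d : ℕ} {N : Fin d → ℕ} {T : TMesh d N} {J Q Q' : Box d} {x : Fin d → ℝ} {i j : Fin d}
  {ε : ℤˣ}

namespace TMesh

/-- The arms at `x` whose end points lie in an `n`-dimensional entity. Only the singleton directions
of the entity `J` containing `x` are considered, since the arms in the other directions stay inside
`J`. -/
def armsInto (T : TMesh d N) (J : Box d) (x : Fin d → ℝ) (n : ℕ) : Set (singDirs J × ℤˣ) :=
  {p | ∃ F ∈ Hdim T n, arm x p.1 p.2 ∈ toSet F}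

lemma exists_mem_armsInto_sub_one (hd : 2 ≤ d) (hN : ∀ k, 0 < N k) (hJ : J ∈ Hdim T (d - 2))
    (hx : x ∈ toSet J) (i : singDirs J) : ∃ ε, (i, ε) ∈ armsInto T J x (d - 1) := by
  obtain ⟨j, hij, hJij⟩ :=
    exists_singDirs_eq_pair (ncard_singDirs_of_mem_Hdim_sub_two hd hJ) i.2
  obtain ⟨F, hF, hFj, hJF⟩ := T.hasHyperfaces hN J hJ.1 j (hJij ▸ .inr rfl)
  obtain ⟨ε, hε⟩ := exists_arm_mem_of_singDirs_eq hJ.1 hx hJij hij hF hFj hJF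
  exact ⟨ε, F, (mem_Hdim_sub_one_iff (by omega)).2 ⟨hF, j, hFj⟩, hε⟩

lemma compl_armsInto_self (hd : 2 ≤ d) (hJ : J ∈ Hdim T (d - 2)) (hx : x ∈ toSet J)
    (hxN : ∀ k, x k ∈ Ioo (0 : ℝ) (N k)) :
    (armsInto T J x d)ᶜ = armsInto T J x (d - 1) := by
  ext ⟨i, ε⟩
  obtain ⟨F, hF, hp⟩ := exists_entity_arm_mem hJ.1 hx i.2 hxN ε
  have hmem (n : ℕ) : (i, ε) ∈ armsInto T J x n ↔ F ∈ Hdim T n := by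
    refine ⟨fun ⟨F', hF', hp'⟩ => ?_, fun hFn => ⟨F, hFn, hp⟩⟩
    rwa [eq_of_mem hF hF'.1 hp hp']
  obtain ⟨j, hij, hJij⟩ :=
    exists_singDirs_eq_pair (ncard_singDirs_of_mem_Hdim_sub_two hd hJ) i.2
  have hsub : singDirs F ⊆ {j} := by
    have hsdiff := singDirs_subset_of_arm_mem hJ.1 hx i.2 hF hp
    exact hsdiff.trans_eq (by simp only [hJij, pair_sdiff_left hij])
  rw [mem_compl_iff, hmem, hmem, mem_Hdim_self_iff, mem_Hdim_sub_one_iff (by omega)]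
  rcases subset_singleton_iff_eq.1 hsub with h | h
  · simp [h, hF, (singleton_ne_empty _).symm]
  · simp [h, hF]

lemma subsingleton_armsInto_self (hd : 2 ≤ d) (hJ : J ∈ Hdim T (d - 2)) (hx : x ∈ toSet J)
    (hxN : ∀ k, x k ∈ Ioo (0 : ℝ) (N k)) : (armsInto T J x d).Subsingleton := by
  rintro ⟨i, ε⟩ ⟨Q, hQ, hp⟩ ⟨j, δ⟩ ⟨Q', hQ', hq⟩
  by_cases hij : i = j
  swap
  · obtain rfl := eq_of_arm_mem_of_arm_mem hJ.1 hx i.2 j.2 (Subtype.coe_ne_coe.2 hij) hQ hQ' hp hq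
    exact absurd (Subtype.ext (arm_unique hJ.1 hx i.2 hQ.1 hp hq).1) hij
  subst hij
  have hN (k) : 0 < N k := by exact_mod_cast (hxN k).1.trans (hxN k).2
  obtain ⟨γ, hγ⟩ := exists_mem_armsInto_sub_one hd hN hJ hx i
  rw [← compl_armsInto_self hd hJ hx hxN] at hγ
  have hεγ : ε ≠ γ := fun h => hγ ⟨Q, hQ, h ▸ hp⟩
  have hδγ : δ ≠ γ := fun h => hγ ⟨Q', hQ', h ▸ hq⟩
  rw [Int.units_ne_iff_eq_neg.1 hεγ, Int.units_ne_iff_eq_neg.1 hδγ]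

lemma valence_eq_ncard_armsInto (hd : 2 ≤ d) (hJ : J ∈ Hdim T (d - 2)) (hx : x ∈ toSet J) :
    valence T J = (armsInto T J x (d - 1)).ncard := by
  have hJ2 := ncard_singDirs_of_mem_Hdim_sub_two hd hJ
  have hfrontier {F : Box d} (hF : F ∈ Hdim T (d - 1)) :
      toSet J ⊆ frontier (toSet F) ↔ J ≤ closureBox F := by
    refine toSet_subset_frontier_iff hJ.1 hF.1 ?_
    rintro rfl
    have := hF.2
    omega
  symm
  refine ncard_congr (fun p hp => hp.choose) (fun p hp => ?_) (fun p q hp hq hpq => ?_)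
    (fun F hF => ?_)
  · have ⟨hF, hpF⟩ := hp.choose_spec
    exact ⟨hF, (hfrontier hF).2 (le_closureBox_of_arm_mem hJ.1 hx p.1.2 hF.1 hpF)⟩
  · have ⟨hF, hpF⟩ := hp.choose_spec
    have hqF : arm x q.1 q.2 ∈ toSet hp.choose := hpq ▸ hq.choose_spec.2
    have := arm_unique hJ.1 hx p.1.2 hF.1 hpF hqF
    exact Prod.ext (Subtype.ext this.1) this.2
  · obtain ⟨hF, hJF⟩ := hF
    rw [hfrontier hF] at hJF
    obtain ⟨-, j, hFj⟩ := (mem_Hdim_sub_one_iff (by omega)).1 hF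
    have hj : j ∈ singDirs J := singDirs_subset_of_le_closureBox ⟨x, hx⟩ hJF (hFj ▸ rfl)
    obtain ⟨i, hji, hJji⟩ := exists_singDirs_eq_pair hJ2 hj
    obtain ⟨ε, hε⟩ := exists_arm_mem_of_singDirs_eq hJ.1 hx (hJji.trans (pair_comm j i)) hji.symm
      hF.1 hFj hJF
    have hp : (⟨i, hJji ▸ .inr rfl⟩, ε) ∈ armsInto T J x (d - 1) := ⟨F, hF, hε⟩
    exact ⟨_, hp, eq_of_mem hp.choose_spec.1.1 hF.1 hp.choose_spec.2 hε⟩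

lemma valence_add_ncard_armsInto_self (hd : 2 ≤ d) (hJ : J ∈ Hdim T (d - 2)) (hx : x ∈ toSet J)
    (hxN : ∀ k, x k ∈ Ioo (0 : ℝ) (N k)) : valence T J + (armsInto T J x d).ncard = 4 := by
  rw [valence_eq_ncard_armsInto hd hJ hx, ← compl_armsInto_self hd hJ hx hxN, add_comm,
    ncard_add_ncard_compl, Nat.card_prod, Nat.card_coe_set_eq,
    ncard_singDirs_of_mem_Hdim_sub_two hd hJ, Nat.card_eq_fintype_card, Fintype.card_units_int]

lemma tjData_of_arm_mem (hJ : J ∈ T.entities) (hx : x ∈ toSet J) (hi : i ∈ singDirs J)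
    (hj : j ∈ singDirs J) (hij : i ≠ j) (hQ : Q ∈ Hdim T d) (hp : arm x j ε ∈ toSet Q) :
    TJData T J Q i j := by
  obtain ⟨hQT, hQ0⟩ := mem_Hdim_self_iff.1 hQ
  have hfrontier (k) : frontier (Q k) = closure (Q k) \ Q k :=
    ((T.mem_entity Q hQT).isOpen (hQ0 ▸ notMem_empty k)).frontier_eq
  have hJi := eq_singleton_of_mem_singDirs hi hx
  have hJj := eq_singleton_of_mem_singDirs hj hx
  have hJQ := le_closureBox_of_arm_mem hJ hx hj hQT hp
  have hiQ : x i ∈ Q i := apply_mem_of_arm_mem hij hp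
  have hjQ : x j ∉ Q j := by
    intro hjQ
    refine notMem_of_arm_mem hJ hx hj hQT hp (mem_toSet.2 fun k => ?_)
    rcases eq_or_ne k j with rfl | hkj
    exacts [hjQ, apply_mem_of_arm_mem hkj hp]
  refine ⟨hQ, (toSet_subset_frontier_iff hJ hQT ?_).2 hJQ, ?_, hij, hi, hj,
    hJi ▸ singleton_subset_iff.2 hiQ, ?_, ?_⟩
  · rintro rfl
    exact notMem_of_arm_mem hJ hx hj hJ hp hx
  · refine eq_empty_of_forall_notMem fun y ⟨hyJ, hyQ⟩ => ?_
    rw [← toSet_closureBox] at hyJ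
    have hyi : y i = x i := by
      simpa only [closureBox, hJi, closure_singleton, mem_singleton_iff] using mem_toSet.1 hyJ i
    have hyQi : y i ∈ frontier (Q i) := hyQ i (mem_univ i)
    rw [hfrontier] at hyQi
    exact hyQi.2 (hyi ▸ hiQ)
  · exact fun h => (hQ0 ▸ notMem_empty i : i ∉ singDirs Q) ⟨x i, h ▸ hJi⟩
  · rw [hJj, hfrontier, singleton_subset_iff]
    exact ⟨hJQ j (mem_toSet.1 hx j), hjQ⟩

end TMesh

lemma TJData.exists_arm_mem (h : TJData T J Q i j) (hd : 2 ≤ d) (hJ : J ∈ Hdim T (d - 2))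
    (hx : x ∈ toSet J) : ∃ ε, arm x j ε ∈ toSet Q := by
  obtain ⟨hQ, hJQ, -, hij, hi, hj, hJiQ, -, -⟩ := h
  obtain ⟨hQT, hQ0⟩ := mem_Hdim_self_iff.1 hQ
  have hJij := singDirs_eq_pair (ncard_singDirs_of_mem_Hdim_sub_two hd hJ) hi hj hij
  have hJneQ : J ≠ Q := by
    rintro rfl
    exact (hQ0 ▸ notMem_empty i : i ∉ singDirs J) hi
  refine TMesh.exists_arm_mem_of_le_closureBox hJ.1 hx hj hQT
    ((TMesh.toSet_subset_frontier_iff hJ.1 hQT hJneQ).1 hJQ) (hQ0 ▸ notMem_empty j) ?_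
  intro k hk hkj
  obtain rfl : k = i := (hJij ▸ hk : k ∈ ({i, j} : Set _)).resolve_right hkj
  exact hJiQ (mem_toSet.1 hx k)

lemma TJData.unique {i' j' : Fin d} (h : TJData T J Q i j) (h' : TJData T J Q' i' j') (hd : 2 ≤ d)
    (hJ : J ∈ Hdim T (d - 2)) (hx : x ∈ toSet J) (hxN : ∀ k, x k ∈ Ioo (0 : ℝ) (N k)) :
    Q = Q' ∧ i = i' ∧ j = j' := by
  obtain ⟨ε, hε⟩ := h.exists_arm_mem hd hJ hx
  obtain ⟨ε', hε'⟩ := h'.exists_arm_mem hd hJ hx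
  obtain ⟨hQ, -, -, hij, hi, hj, -⟩ := h
  obtain ⟨hQ', -, -, hij', hi', hj', -⟩ := h'
  have harm : ((⟨j, hj⟩, ε) : singDirs J × ℤˣ) = (⟨j', hj'⟩, ε') :=
    TMesh.subsingleton_armsInto_self hd hJ hx hxN ⟨Q, hQ, hε⟩ ⟨Q', hQ', hε'⟩
  obtain ⟨hjj', rfl⟩ := Prod.mk_inj.1 harm
  obtain rfl : j = j' := congrArg Subtype.val hjj'
  have hJji := singDirs_eq_pair (ncard_singDirs_of_mem_Hdim_sub_two hd hJ) hj hi hij.symm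
  have hii' : i' = i := (hJji ▸ hi' : i' ∈ ({j, i} : Set _)).resolve_left hij'
  exact ⟨TMesh.eq_of_mem hQ.1 hQ'.1 hε hε', hii'.symm, rfl⟩

end Valence

end TSpline

/-- Every `(d-2)`-dimensional mesh entity not contained in `∂Ω` lies in
the boundary of at least three and at most four hyperfaces; consequently every
T-junction has valence exactly 3 and its associated cell, orthogonal direction and
pointing direction are uniquely determined. -/
theorem TSpline.tjunction_valence_and_uniqueness
    {d : ℕ} {N : Fin d → ℕ} (hd : 2 ≤ d) (T : TSpline.TMesh d N)
    (J : TSpline.Box d) (hJ : J ∈ TSpline.Hdim T (d - 2))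
    (hbd : ¬ TSpline.toSet J ⊆ TSpline.bdryDomain N) :
    (3 ≤ TSpline.valence T J ∧ TSpline.valence T J ≤ 4) ∧
    (TSpline.IsTJunction T J →
      TSpline.valence T J = 3 ∧
      (∃ Q : TSpline.Box d, ∃ i j : Fin d, TSpline.TJData T J Q i j) ∧
      ∀ Q Q' : TSpline.Box d, ∀ i j i' j' : Fin d,
        TSpline.TJData T J Q i j → TSpline.TJData T J Q' i' j' →
        Q = Q' ∧ i = i' ∧ j = j') := by
  obtain ⟨x, hx, hxN⟩ := TSpline.TMesh.exists_mem_forall_mem_Ioo hJ.1 hbd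
  have hcount := TSpline.TMesh.valence_add_ncard_armsInto_self hd hJ hx hxN
  have hle : (T.armsInto J x d).ncard ≤ 1 :=
    ncard_le_one_iff_subsingleton.2 (TSpline.TMesh.subsingleton_armsInto_self hd hJ hx hxN)
  refine ⟨by omega, fun ⟨_, _, hlt⟩ => ⟨by omega, ?_, fun Q Q' i j i' j' h h' =>
    h.unique h' hd hJ hx hxN⟩⟩
  obtain ⟨⟨j, ε⟩, Q, hQ, hp⟩ : (T.armsInto J x d).Nonempty :=
    nonempty_of_ncard_ne_zero (by omega)
  obtain ⟨i, hji, hJji⟩ := TSpline.exists_singDirs_eq_pair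
    (TSpline.ncard_singDirs_of_mem_Hdim_sub_two hd hJ) j.2
  exact ⟨Q, i, j, TSpline.TMesh.tjData_of_arm_mem hJ.1 hx (hJji ▸ .inr rfl) j.2 hji.symm hQ hp⟩
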